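/- If there exists a finite sequence of growth-rule applications taking a pair (S,J) to the pair of empty strings, then J is a dominant state string for S. -/

import Mathlib

/-!
Dominance is pulled back along each growth rule, so it propagates backwards from the pair of empty
strings. Every rule is local: it preserves the weight of the rewritten pair, so only one new
intermediate point of the lattice path has to be checked. That point is obtained either from the
point before it by adding a fundamental weight (when the first state is `1`), or, when the first
state is `0`, by adding a fundamental weight to a point already known to lie in the chamber: the
point of the rewritten path that follows the first new letter.

The recursive predicate `DomFrom`, with an arbitrary starting point, makes this locality precise:
`DomFrom.append` strips a common prefix, `Step.domFrom` checks the rules, and `DomFrom.dominant`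
returns to `Dominant`.
-/

noncomputable section

/-- The ground field `K = ℚ(v)`. -/
abbrev K : Type := RatFunc ℚ

/-- The indeterminate `v`. -/
def v : K := RatFunc.X

/-- The three states `-1, 0, 1`. -/
inductive St where
  | neg : St
  | zero : St
  | pos : St
deriving DecidableEq

instance : Fintype St where
  elems := {St.neg, St.zero, St.pos}
  complete := fun x => by cases x <;> simp

/-- The integer value of a state. -/
def stval : St → ℤ
  | .neg => -1
  | .zero => 0
  | .pos => 1

/-- The order `-1 < 0 < 1` on states. -/
def stLt (a b : St) : Prop := stval a < stval b

/-- The weight `μ(s, j) ∈ ℤ²`; `true` is the sign `+`, `false` is `-`. -/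
def wt : Bool → St → ℤ × ℤ
  | true, .pos => (1, 0)
  | true, .zero => (-1, 1)
  | true, .neg => (0, -1)
  | false, .pos => (0, 1)
  | false, .zero => (1, -1)
  | false, .neg => (-1, 0)

/-- Total weight `Σ μ(s_k, j_k)` of a sign string and a state string. -/
def wtSum (S : List Bool) (J : List St) : ℤ × ℤ :=
  ((S.zip J).map fun p => wt p.1 p.2).sum

/-- A state string is dominant if its lattice path stays in the dominant
Weyl chamber and returns to the origin. -/
def Dominant (S : List Bool) (J : List St) : Prop :=
  J.length = S.length ∧
  (∀ k : ℕ, 0 ≤ (wtSum (S.take k) (J.take k)).1 ∧ 0 ≤ (wtSum (S.take k) (J.take k)).2) ∧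
  wtSum S J = 0

/-- Coefficients of `b^{+-}(1) ∈ V⁺ ⊗ V⁻`. -/
def bCpm : St → St → K
  | .pos, .neg => 1
  | .zero, .zero => v⁻¹
  | .neg, .pos => v⁻¹ ^ 2
  | _, _ => 0

/-- Coefficients of `b^{-+}(1) ∈ V⁻ ⊗ V⁺`. -/
def bCmp : St → St → K
  | .pos, .neg => 1
  | .zero, .zero => v⁻¹
  | .neg, .pos => v⁻¹ ^ 2
  | _, _ => 0

/-- Matrix entries of `σ_{+-} : V⁺ ⊗ V⁻ → K`. -/
def sCpm : St → St → K
  | .neg, .pos => 1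
  | .zero, .zero => v
  | .pos, .neg => v ^ 2
  | _, _ => 0

/-- Matrix entries of `σ_{-+} : V⁻ ⊗ V⁺ → K`. -/
def sCmp : St → St → K
  | .neg, .pos => 1
  | .zero, .zero => v
  | .pos, .neg => v ^ 2
  | _, _ => 0

/-- `tYpp a b c` is the coefficient of `e_a ⊗ e_b` in `t^{++}_-(e_c)`. -/
def tYpp : St → St → St → K
  | .pos, .zero, .pos => 1
  | .zero, .pos, .pos => v⁻¹
  | .pos, .neg, .zero => 1
  | .neg, .pos, .zero => v⁻¹
  | .zero, .neg, .neg => 1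
  | .neg, .zero, .neg => v⁻¹
  | _, _, _ => 0

/-- `tYmm a b c` is the coefficient of `e_a ⊗ e_b` in `t^{--}_+(e_c)`. -/
def tYmm : St → St → St → K
  | .pos, .zero, .pos => 1
  | .zero, .pos, .pos => v⁻¹
  | .pos, .neg, .zero => 1
  | .neg, .pos, .zero => v⁻¹
  | .zero, .neg, .neg => 1
  | .neg, .zero, .neg => v⁻¹
  | _, _, _ => 0

/-- `tLpp a b c` is the coefficient of `e_c` in `t^-_{++}(e_a ⊗ e_b)`. -/
def tLpp : St → St → St → K
  | .pos, .zero, .pos => v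
  | .zero, .pos, .pos => 1
  | .pos, .neg, .zero => v
  | .neg, .pos, .zero => 1
  | .zero, .neg, .neg => v
  | .neg, .zero, .neg => 1
  | _, _, _ => 0

/-- `tLmm a b c` is the coefficient of `e_c` in `t^+_{--}(e_a ⊗ e_b)`. -/
def tLmm : St → St → St → K
  | .pos, .zero, .pos => v
  | .zero, .pos, .pos => 1
  | .pos, .neg, .zero => v
  | .neg, .pos, .zero => 1
  | .zero, .neg, .neg => v
  | .neg, .zero, .neg => 1
  | _, _, _ => 0

/-- Matrix entries of the H-map
`(id_{V⁺} ⊗ t^-_{++}) ∘ (t^{++}_- ⊗ id_{V⁺}) : V⁻ ⊗ V⁺ → V⁺ ⊗ V⁻`: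
`HCpm a b c d` is the coefficient of `e_a ⊗ e_b` in the image of `e_c ⊗ e_d`. -/
def HCpm (a b c d : St) : K := ∑ y : St, tYpp a y c * tLpp y d b

/-- Matrix entries of the H-map
`(t^-_{++} ⊗ id_{V⁺}) ∘ (id_{V⁺} ⊗ t^{++}_-) : V⁺ ⊗ V⁻ → V⁻ ⊗ V⁺`:
`HCmp a b c d` is the coefficient of `e_a ⊗ e_b` in the image of `e_c ⊗ e_d`. -/
def HCmp (a b c d : St) : K := ∑ x : St, tLpp c x a * tYpp x b d

/-- State patterns of the three H-rules: `(j_k, j_{k+1})` on top, the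
replacement below. -/
inductive HPat : St → St → St → St → Prop where
  | h1 : HPat .pos .zero .zero .pos
  | h2 : HPat .zero .zero .neg .pos
  | h3 : HPat .zero .neg .neg .zero

/-- State patterns of the three Y-rules. -/
inductive YPat : St → St → St → Prop where
  | y1 : YPat .pos .zero .pos
  | y2 : YPat .pos .neg .zero
  | y3 : YPat .zero .neg .neg

/-- One application of a growth rule, rewriting `(S, J)` to `(S', J')`. -/
inductive Step : List Bool → List St → List Bool → List St → Prop where
  | hstep (A B : List Bool) (P Q : List St) (s1 s2 : Bool) (j1 j2 j1' j2' : St)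
      (hl : A.length = P.length) (hs : s1 ≠ s2) (hp : HPat j1 j2 j1' j2') :
      Step (A ++ s1 :: s2 :: B) (P ++ j1 :: j2 :: Q)
        (A ++ (!s1) :: (!s2) :: B) (P ++ j1' :: j2' :: Q)
  | ustep (A B : List Bool) (P Q : List St) (s1 s2 : Bool)
      (hl : A.length = P.length) (hs : s1 ≠ s2) :
      Step (A ++ s1 :: s2 :: B) (P ++ St.pos :: St.neg :: Q) (A ++ B) (P ++ Q)
  | ystep (A B : List Bool) (P Q : List St) (s : Bool) (j1 j2 j' : St)
      (hl : A.length = P.length) (hp : YPat j1 j2 j') :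
      Step (A ++ s :: s :: B) (P ++ j1 :: j2 :: Q) (A ++ (!s) :: B) (P ++ j' :: Q)

/-- A complete execution of the growth algorithm from `(S, J)` down to the
pair of empty strings. -/
inductive Exec : List Bool → List St → Type where
  | nil : Exec [] []
  | hstep (A B : List Bool) (P Q : List St) (s1 s2 : Bool) (j1 j2 j1' j2' : St)
      (hl : A.length = P.length) (hs : s1 ≠ s2) (hp : HPat j1 j2 j1' j2')
      (e : Exec (A ++ (!s1) :: (!s2) :: B) (P ++ j1' :: j2' :: Q)) :
      Exec (A ++ s1 :: s2 :: B) (P ++ j1 :: j2 :: Q)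
  | ustep (A B : List Bool) (P Q : List St) (s1 s2 : Bool)
      (hl : A.length = P.length) (hs : s1 ≠ s2)
      (e : Exec (A ++ B) (P ++ Q)) :
      Exec (A ++ s1 :: s2 :: B) (P ++ St.pos :: St.neg :: Q)
  | ystep (A B : List Bool) (P Q : List St) (s : Bool) (j1 j2 j' : St)
      (hl : A.length = P.length) (hp : YPat j1 j2 j')
      (e : Exec (A ++ (!s) :: B) (P ++ j' :: Q)) :
      Exec (A ++ s :: s :: B) (P ++ j1 :: j2 :: Q)

/-- The web tensor of an execution, as coordinates with respect to the basis
`e^S_J` of `V^S`: `web e L` is the coefficient of `e^S_L`. -/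
def web : {S : List Bool} → {J : List St} → Exec S J → List St → K
  | _, _, .nil, L => if L = [] then 1 else 0
  | _, _, .hstep A _ _ _ s1 _ _ _ _ _ _ _ _ e, L =>
      match L.drop A.length with
      | a :: b :: R =>
          ∑ c : St, ∑ d : St,
            (if s1 then HCpm a b c d else HCmp a b c d) *
              web e (L.take A.length ++ c :: d :: R)
      | _ => 0
  | _, _, .ustep A _ _ _ s1 _ _ _ e, L =>
      match L.drop A.length with
      | a :: b :: R => (if s1 then bCpm a b else bCmp a b) * web e (L.take A.length ++ R)
      | _ => 0
  | _, _, .ystep A _ _ _ s _ _ _ _ _ e, L =>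
      match L.drop A.length with
      | a :: b :: R =>
          ∑ c : St, (if s then tYpp a b c else tYmm a b c) * web e (L.take A.length ++ c :: R)
      | _ => 0

/-- `c ∈ v⁻¹ ℤ[v⁻¹]`: a polynomial in `v⁻¹` with zero constant term. -/
def ZeroConst (c : K) : Prop :=
  ∃ p : Polynomial ℤ, p.coeff 0 = 0 ∧ c = Polynomial.aeval v⁻¹ p

/-- `x` has the negative-exponent property relative to a state string `J`
(`n` is the length of the ambient sign string). -/
def NegExpProp (n : ℕ) (x : List St → K) (J : List St) : Prop :=
  x J = 1 ∧ ∀ J' : List St, J'.length = n → J' ≠ J → ZeroConst (x J')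

/-- `c ∈ ℕ[v, v⁻¹]`: a Laurent polynomial with nonnegative integer
coefficients. -/
def IsNatLaurent (c : K) : Prop :=
  ∃ (p : Polynomial ℕ) (m : ℕ), c = v⁻¹ ^ m * Polynomial.aeval v p

/-- `c ∈ ℤ[v⁻¹]`. -/
def InZInv (c : K) : Prop := ∃ p : Polynomial ℤ, c = Polynomial.aeval v⁻¹ p

/-- Property P: all coefficients lie in `ℤ[v⁻¹]` and at most one of them has a
nonzero constant term. -/
def PropP (n : ℕ) (x : List St → K) : Prop :=
  (∀ J : List St, J.length = n → InZInv (x J)) ∧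
  ∀ J1 J2 : List St, J1.length = n → J2.length = n →
    ¬ ZeroConst (x J1) → ¬ ZeroConst (x J2) → J1 = J2

/-- The sign string `(+,+,−,−,+,+,−,−,+,+,−,−)`. -/
def base : List Bool :=
  [true, true, false, false, true, true, false, false, true, true, false, false]


/-- The lattice path of `(S, J)` started at `(x, y)` has all its later points in the dominant
chamber and ends at the origin; in particular `S` and `J` have equal length. -/
def DomFrom : ℤ → ℤ → List Bool → List St → Prop
  | x, y, [], [] => x = 0 ∧ y = 0
  | x, y, s :: S, j :: J =>
      0 ≤ x + (wt s j).1 ∧ 0 ≤ y + (wt s j).2 ∧ DomFrom (x + (wt s j).1) (y + (wt s j).2) S J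
  | _, _, _, _ => False

lemma wtSum_cons (s : Bool) (S : List Bool) (j : St) (J : List St) :
    wtSum (s :: S) (j :: J) = wt s j + wtSum S J := by
  simp [wtSum]

lemma DomFrom.spec {S : List Bool} {J : List St} {x y : ℤ} (hx : 0 ≤ x) (hy : 0 ≤ y)
    (h : DomFrom x y S J) :
    J.length = S.length ∧
    (∀ k : ℕ, 0 ≤ x + (wtSum (S.take k) (J.take k)).1 ∧
      0 ≤ y + (wtSum (S.take k) (J.take k)).2) ∧
    x + (wtSum S J).1 = 0 ∧ y + (wtSum S J).2 = 0 := by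
  induction S generalizing J x y with
  | nil =>
    cases J with
    | nil => simpa [DomFrom, wtSum, hx, hy] using h
    | cons j J => exact h.elim
  | cons s S ih =>
    cases J with
    | nil => exact h.elim
    | cons j J =>
      obtain ⟨h1, h2, h3⟩ := h
      obtain ⟨hl, hk, h4, h5⟩ := ih h1 h2 h3
      refine ⟨by simp [hl], fun k => ?_, ?_, ?_⟩
      · cases k with
        | zero => simp [wtSum, hx, hy]
        | succ k => simpa [wtSum_cons, add_assoc] using hk k
      · simpa [wtSum_cons, add_assoc] using h4
      · simpa [wtSum_cons, add_assoc] using h5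

lemma DomFrom.dominant {S : List Bool} {J : List St} (h : DomFrom 0 0 S J) : Dominant S J := by
  obtain ⟨hl, hk, h1, h2⟩ := h.spec le_rfl le_rfl
  exact ⟨hl, by simpa using hk, Prod.ext (by simpa using h1) (by simpa using h2)⟩

/-- An implication between path conditions, valid from every starting point in the chamber,
remains valid behind a common prefix. -/
lemma DomFrom.append {S T : List Bool} {J L : List St}
    (himp : ∀ x y : ℤ, 0 ≤ x → 0 ≤ y → DomFrom x y T L → DomFrom x y S J)
    (A : List Bool) (P : List St) (hl : A.length = P.length) (x y : ℤ) (hx : 0 ≤ x) (hy : 0 ≤ y)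
    (h : DomFrom x y (A ++ T) (P ++ L)) : DomFrom x y (A ++ S) (P ++ J) := by
  induction A generalizing P x y with
  | nil =>
    obtain rfl : P = [] := List.length_eq_zero_iff.mp hl.symm
    exact himp x y hx hy h
  | cons a A ih =>
    cases P with
    | nil => simp at hl
    | cons p P =>
      obtain ⟨h1, h2, h3⟩ := h
      exact ⟨h1, h2, ih P (by simpa using hl) _ _ h1 h2 h3⟩

/-- Two letters may be prepended when the path they start stays in the chamber and ends where
`DomFrom` is known. -/
lemma DomFrom.cons_cons {x y x' y' : ℤ} {s1 s2 : Bool} {j1 j2 : St} {B : List Bool} {Q : List St}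
    (h : DomFrom x' y' B Q) (hx' : 0 ≤ x') (hy' : 0 ≤ y')
    (h1 : 0 ≤ x + (wt s1 j1).1) (h2 : 0 ≤ y + (wt s1 j1).2)
    (hx : x + (wt s1 j1).1 + (wt s2 j2).1 = x') (hy : y + (wt s1 j1).2 + (wt s2 j2).2 = y') :
    DomFrom x y (s1 :: s2 :: B) (j1 :: j2 :: Q) := by
  subst hx hy
  exact ⟨h1, h2, hx', hy', h⟩

lemma Step.domFrom {S T : List Bool} {J L : List St} (hst : Step S J T L)
    (h : DomFrom 0 0 T L) : DomFrom 0 0 S J := by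
  cases hst with
  | hstep A B P Q s1 s2 j1 j2 j1' j2' hl hs hp =>
    refine DomFrom.append (fun x y hx hy h => ?_) A P hl 0 0 le_rfl le_rfl h
    obtain ⟨h1, h2, h3, h4, h5⟩ := h
    refine h5.cons_cons h3 h4 ?_ ?_ ?_ ?_ <;> cases hp <;> cases s1 <;> cases s2 <;>
      simp [wt] at * <;> omega
  | ustep A B P Q s1 s2 hl hs =>
    refine DomFrom.append (fun x y hx hy h => ?_) A P hl 0 0 le_rfl le_rfl h
    refine h.cons_cons hx hy ?_ ?_ ?_ ?_ <;> cases s1 <;> cases s2 <;>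
      simp [wt] at * <;> omega
  | ystep A B P Q s j1 j2 j' hl hp =>
    refine DomFrom.append (fun x y hx hy h => ?_) A P hl 0 0 le_rfl le_rfl h
    obtain ⟨h1, h2, h3⟩ := h
    refine h3.cons_cons h1 h2 ?_ ?_ ?_ ?_ <;> cases hp <;> cases s <;>
      simp [wt] at * <;> omega

/-- if the growth algorithm can reduce `(S, J)` to the empty
pair, then `J` is dominant for `S`. -/
theorem dominant_of_reaches_nil (S : List Bool) (J : List St)
    (h : Relation.ReflTransGen
      (fun p q : List Bool × List St => Step p.1 p.2 q.1 q.2) (S, J) ([], [])) :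
    Dominant S J := by
  refine DomFrom.dominant ?_
  suffices ∀ p : List Bool × List St, Relation.ReflTransGen
      (fun p q : List Bool × List St => Step p.1 p.2 q.1 q.2) p ([], []) →
      DomFrom 0 0 p.1 p.2 from this (S, J) h
  intro p hp
  induction hp using Relation.ReflTransGen.head_induction_on with
  | refl => exact ⟨rfl, rfl⟩
  | head hst _ ih => exact hst.domFrom ih

end
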